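/- arXiv:2208.00666 — 2 statements merged into one kernel-verified Lean document; each statement's English description precedes it below -/
import Mathlib

section
/- Let k ≥ 1, t ≥ 0, r, j, d be integers with 0 ≤ r ≤ 2^t − 1, j = 2^t + r, and d ≥ 2^{t+k−1} + r. Then e_{k,j} does not belong to the ideal ⟨x₁^d, …, x_k^d⟩ of 𝔽₂[x₁,…,x_k] generated by the d-th powers of the variables. -/
/-!
Write `D_k = ∏_{α ≠ 0} ℓ_α`, so that `x₁⋯x_k · e_{k,j} = D_k ^ j`. It suffices to find a monomial
of `D_k ^ j` all of whose exponents are at most `2 ^ (t + k - 1) + r`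
(`exists_coeff_dickson_pow_ne_zero`), since membership of `e_{k,j}` in `⟨x_i ^ d⟩` puts `D_k ^ j` in
`⟨x_i ^ (d + 1)⟩`.

Such a monomial is found by induction on `k`. Singling out one variable `X` gives
`D_{k+1} = D_k · F`, where `F = ∏_α (X + ℓ_α)` is the product over all of `𝔽₂^k`. In
characteristic two `F` is an additive polynomial (`spanPoly_comp_add`), hence its only odd-degree
term is the linear one, with coefficient `D_k`; it is monic of degree `2 ^ k`. Reading off the binary
digits of `r`, one finds that the coefficient of `X ^ (2 ^ (t + k) + r)` in `F ^ (2 ^ t + r)` is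
exactly `D_k ^ r` (`coeff_pow_of_odd_coeff`). Thus the coefficient of that power of `X` in
`D_{k+1} ^ j` is `D_k ^ (j + r) = D_k ^ (2 ^ t + 2 r)`, and the induction hypothesis applies to
`2 ^ t + 2 r` in its own form `2 ^ t' + r'`: either `t' = t`, `r' = 2 r`, or `t' = t + 1`,
`r' = 2 r - 2 ^ t`. In both cases the bound it gives is at most `2 ^ (t + k) + r`.
-/

noncomputable section

open MvPolynomial Finset

abbrev F2 : Type := ZMod 2

/-- The linear form `ℓ_α = α₁x₁ + ⋯ + α_k x_k` over `𝔽₂`. -/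
def linF (k : ℕ) (α : Fin k → ZMod 2) : MvPolynomial (Fin k) F2 :=
  ∑ i, C (α i) * X i

/-- The polynomial `e_{k,j} = (∏_i x_i^{j-1}) ⬝ ∏_α ℓ_α^j`, the product over all
`α ∈ 𝔽₂^k` that are neither zero nor a standard basis vector. -/
def ePoly (k j : ℕ) : MvPolynomial (Fin k) F2 :=
  (∏ i, X i ^ (j - 1)) *
    ∏ α ∈ Finset.univ.filter
        (fun α : Fin k → ZMod 2 => α ≠ 0 ∧ ¬ ∃ i, α = Pi.single i 1),
      linF k α ^ j

/-- The polynomial `∏_α (X + ∑ i, α i • y i)`, over all `α ∈ 𝔽₂^n`. For `𝔽₂`-linearly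
independent `y` its roots are the elements of the `𝔽₂`-span of `y`. -/
def spanPoly {R : Type*} [CommRing R] [Algebra F2 R] (n : ℕ) (y : Fin n → R) : Polynomial R :=
  ∏ α : Fin n → ZMod 2, (Polynomial.X + Polynomial.C (∑ i, algebraMap F2 R (α i) * y i))

theorem spanPoly_succ {R : Type*} [CommRing R] [Algebra F2 R] (n : ℕ) (y : Fin (n + 1) → R) :
    spanPoly (n + 1) y = spanPoly n (Fin.tail y) *
      (spanPoly n (Fin.tail y)).comp (Polynomial.X + Polynomial.C (y 0)) := by
  unfold spanPoly
  rw [← (Fin.consEquiv (fun _ : Fin (n + 1) => ZMod 2)).prod_comp, Fintype.prod_prod_type,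
    Polynomial.prod_comp]
  have h2 : ∀ g : ZMod 2 → Polynomial R, ∏ a, g a = g 0 * g 1 := fun g => Fin.prod_univ_two g
  rw [h2]
  congr 1
  · refine Finset.prod_congr rfl fun α _ => ?_
    simp [Fin.consEquiv, Fin.sum_univ_succ, Fin.tail]
  · refine Finset.prod_congr rfl fun α _ => ?_
    simp [Fin.consEquiv, Fin.sum_univ_succ, Fin.tail, add_assoc]

theorem spanPoly_comp_add {R : Type*} [CommRing R] [Algebra F2 R] [CharP R 2] (n : ℕ)
    (y : Fin n → R) (p q : Polynomial R) :
    (spanPoly n y).comp (p + q) = (spanPoly n y).comp p + (spanPoly n y).comp q := by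
  induction n generalizing p q with
  | zero => simp [spanPoly]
  | succ n ih =>
    have h : (2 : Polynomial R) = 0 := CharTwo.two_eq_zero
    simp only [spanPoly_succ, Polynomial.mul_comp, ih, Polynomial.add_comp, Polynomial.comp_assoc,
      Polynomial.X_comp, Polynomial.C_comp]
    linear_combination ((spanPoly n (Fin.tail y)).comp p * (spanPoly n (Fin.tail y)).comp q) * h

theorem coeff_two_mul_sq {R : Type*} [CommRing R] [CharP R 2] (p : Polynomial R) (n : ℕ) :
    (p ^ 2).coeff (2 * n) = p.coeff n ^ 2 := by
  rw [← Polynomial.map_frobenius_expand, Polynomial.coeff_map, mul_comm 2 n,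
    Polynomial.coeff_expand_mul two_pos, frobenius_def]

theorem coeff_odd_sq {R : Type*} [CommRing R] [CharP R 2] (p : Polynomial R) (n : ℕ)
    (hn : ¬ 2 ∣ n) : (p ^ 2).coeff n = 0 := by
  rw [← Polynomial.map_frobenius_expand, Polynomial.coeff_map, Polynomial.coeff_expand two_pos,
    if_neg hn, map_zero]

theorem spanPoly_coeff_odd {R : Type*} [CommRing R] [Algebra F2 R] [CharP R 2] (n : ℕ)
    (y : Fin n → R) (m : ℕ) (hm : ¬ 2 ∣ m) (h1 : m ≠ 1) : (spanPoly n y).coeff m = 0 := by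
  induction n with
  | zero => simp [spanPoly, Polynomial.coeff_X, h1.symm]
  | succ n ih =>
    -- By additivity, `F (X + y₀) = F X + F y₀`, so the new polynomial is `F ^ 2 + F y₀ • F`.
    rw [spanPoly_succ, spanPoly_comp_add, Polynomial.comp_X, Polynomial.comp_C, mul_add, ← sq,
      Polynomial.coeff_add, coeff_odd_sq _ _ hm, Polynomial.coeff_mul_C, ih, zero_mul, add_zero]

theorem spanPoly_monic {R : Type*} [CommRing R] [Algebra F2 R] (n : ℕ) (y : Fin n → R) :
    (spanPoly n y).Monic :=
  Polynomial.monic_prod_of_monic _ _ fun _ _ => Polynomial.monic_X_add_C _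

theorem spanPoly_coeff_two_pow {R : Type*} [CommRing R] [Nontrivial R] [Algebra F2 R] (n : ℕ)
    (y : Fin n → R) : (spanPoly n y).coeff (2 ^ n) = 1 := by
  have h : (spanPoly n y).natDegree = 2 ^ n := by
    unfold spanPoly
    rw [Polynomial.natDegree_prod_of_monic _ _ fun _ _ => Polynomial.monic_X_add_C _]
    simp only [Polynomial.natDegree_X_add_C]
    simp [ZMod.card]
  rw [← h]
  exact spanPoly_monic n y

theorem spanPoly_coeff_one {R : Type*} [CommRing R] [Algebra F2 R] (n : ℕ) (y : Fin n → R) :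
    (spanPoly n y).coeff 1 =
      ∏ α ∈ univ.filter (fun α : Fin n → ZMod 2 => α ≠ 0), ∑ i, algebraMap F2 R (α i) * y i := by
  unfold spanPoly
  rw [← Finset.mul_prod_erase univ _ (Finset.mem_univ 0), ← Finset.filter_ne']
  simp [Polynomial.coeff_zero_prod, Polynomial.coeff_X_mul (n := 0)]

/-- In characteristic two, if `X` is the only odd power of `X` occurring in `F`, then powers of `F`
can be read off one binary digit of the exponent at a time. -/
theorem coeff_pow_of_odd_coeff {R : Type*} [CommRing R] [CharP R 2] (F : Polynomial R) (k : ℕ)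
    (htop : F.coeff (2 ^ k) = 1) (hodd : ∀ m, ¬ 2 ∣ m → m ≠ 1 → F.coeff m = 0)
    (t r : ℕ) (hr : r < 2 ^ t) :
    (F ^ (2 ^ t + r)).coeff (2 ^ (t + k) + r) = F.coeff 1 ^ r := by
  induction t generalizing r with
  | zero =>
    obtain rfl : r = 0 := by simpa using hr
    simpa using htop
  | succ t ih =>
    have key := ih (r / 2) (by rw [pow_succ] at hr; omega)
    rcases Nat.even_or_odd' r with ⟨s, rfl | rfl⟩
    · rw [show 2 * s / 2 = s by omega] at key
      rw [show 2 ^ (t + 1) + 2 * s = (2 ^ t + s) * 2 by ring, pow_mul,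
        show 2 ^ (t + 1 + k) + 2 * s = 2 * (2 ^ (t + k) + s) by ring, coeff_two_mul_sq, key]
      ring
    · rw [show (2 * s + 1) / 2 = s by omega] at key
      rw [show 2 ^ (t + 1) + (2 * s + 1) = (2 ^ t + s) * 2 + 1 by ring, pow_succ, pow_mul,
        show 2 ^ (t + 1 + k) + (2 * s + 1) = 2 * (2 ^ (t + k) + s) + 1 by ring,
        Polynomial.coeff_mul, Finset.sum_eq_single (2 * (2 ^ (t + k) + s), 1), coeff_two_mul_sq,
        key]
      · ring
      · -- The square has only even-degree terms, so the other factor must contribute degree one.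
        rintro ⟨a, b⟩ hab hne
        rw [Finset.HasAntidiagonal.mem_antidiagonal] at hab
        dsimp only at hab ⊢
        by_cases ha : 2 ∣ a
        · rw [hodd b (by omega) (by rintro rfl; exact hne (by ext <;> simp; omega)), mul_zero]
        · rw [coeff_odd_sq _ _ ha, zero_mul]
      · intro h
        simp at h

/-- The product of all nonzero linear forms in `k` variables over `𝔽₂`, i.e. the top Dickson
invariant. -/
def dickson (k : ℕ) : MvPolynomial (Fin k) F2 :=
  ∏ α ∈ univ.filter (fun α : Fin k → ZMod 2 => α ≠ 0), linF k α

theorem spanPoly_X_coeff_one (k : ℕ) :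
    (spanPoly k (X : Fin k → MvPolynomial (Fin k) F2)).coeff 1 = dickson k :=
  spanPoly_coeff_one k _

theorem finSuccEquiv_dickson (k : ℕ) :
    finSuccEquiv F2 k (dickson (k + 1)) =
      Polynomial.C (dickson k) * spanPoly k (X : Fin k → MvPolynomial (Fin k) F2) := by
  have h2 : ∀ g : ZMod 2 → Polynomial (MvPolynomial (Fin k) F2), ∏ a, g a = g 0 * g 1 :=
    fun g => Fin.prod_univ_two g
  have hlin : ∀ (a : ZMod 2) (α : Fin k → ZMod 2),
      finSuccEquiv F2 k (linF (k + 1) (Fin.cons a α)) =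
        Polynomial.C (C a) * Polynomial.X + Polynomial.C (linF k α) := by
    intro a α
    simp [linF, Fin.sum_univ_succ, finSuccEquiv_apply]
  unfold dickson
  rw [map_prod, Finset.prod_filter,
    ← (Fin.consEquiv (fun _ : Fin (k + 1) => ZMod 2)).prod_comp, Fintype.prod_prod_type, h2]
  congr 1
  · rw [map_prod, Finset.prod_filter]
    refine Finset.prod_congr rfl fun α _ => ?_
    have : (Fin.cons 0 α : Fin (k + 1) → ZMod 2) = 0 ↔ α = 0 := by
      simp [funext_iff, Fin.forall_fin_succ]
    simp only [Fin.consEquiv, Equiv.coe_fn_mk, ne_eq, this, hlin]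
    simp
  · refine Finset.prod_congr rfl fun α _ => ?_
    have : (Fin.cons 1 α : Fin (k + 1) → ZMod 2) ≠ 0 := fun h => by simpa using congrFun h 0
    simp only [Fin.consEquiv, Equiv.coe_fn_mk, this, hlin, if_true, ne_eq, not_false_eq_true]
    simp [linF, algebraMap_eq]

theorem exists_coeff_dickson_pow_ne_zero (k t r : ℕ) (hr : r < 2 ^ t) :
    ∃ m : Fin k →₀ ℕ, coeff m (dickson k ^ (2 ^ t + r)) ≠ 0 ∧
      ∀ i, m i ≤ 2 ^ (t + k - 1) + r := by
  induction k generalizing t r with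
  | zero =>
    refine ⟨0, ?_, fun i => i.elim0⟩
    have : dickson 0 = 1 := by
      unfold dickson
      exact Finset.prod_eq_one fun α hα => absurd (Subsingleton.elim α 0) (Finset.mem_filter.1 hα).2
    simp [this]
  | succ k ih =>
    have key : (finSuccEquiv F2 k (dickson (k + 1) ^ (2 ^ t + r))).coeff (2 ^ (t + k) + r) =
        dickson k ^ (2 ^ t + 2 * r) := by
      rw [map_pow, finSuccEquiv_dickson, mul_pow, ← Polynomial.C_pow, Polynomial.coeff_C_mul,
        coeff_pow_of_odd_coeff _ k (spanPoly_coeff_two_pow k _)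
          (spanPoly_coeff_odd k _) t r hr, spanPoly_X_coeff_one]
      ring
    obtain ⟨m, hm, hb⟩ : ∃ m : Fin k →₀ ℕ, coeff m (dickson k ^ (2 ^ t + 2 * r)) ≠ 0 ∧
        ∀ i, m i ≤ 2 ^ (t + k) + r := by
      by_cases h : 2 * r < 2 ^ t
      · obtain ⟨m, hm, hb⟩ := ih t (2 * r) h
        refine ⟨m, hm, fun i => (hb i).trans ?_⟩
        obtain ⟨l, rfl⟩ : ∃ l, k = l + 1 := ⟨k - 1, by have := i.pos; omega⟩
        have h1 : 2 ^ t ≤ 2 ^ (t + l) := Nat.pow_le_pow_right two_pos (by omega)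
        rw [show t + (l + 1) - 1 = t + l by omega, ← add_assoc, pow_succ]
        omega
      · obtain ⟨m, hm, hb⟩ := ih (t + 1) (2 * r - 2 ^ t) (by rw [pow_succ]; omega)
        rw [show 2 ^ (t + 1) + (2 * r - 2 ^ t) = 2 ^ t + 2 * r by rw [pow_succ]; omega] at hm
        refine ⟨m, hm, fun i => (hb i).trans ?_⟩
        rw [show t + 1 + k - 1 = t + k by omega]
        omega
    refine ⟨m.cons (2 ^ (t + k) + r), ?_, fun i => ?_⟩
    · rwa [← finSuccEquiv_coeff_coeff, key]
    · rw [← add_assoc, Nat.add_sub_cancel]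
      refine Fin.cases ?_ (fun i => ?_) i
      · simp
      · simpa using hb i

theorem linF_single (k : ℕ) (i : Fin k) : linF k (Pi.single i 1) = X i := by
  unfold linF
  rw [Finset.sum_eq_single i] <;> simp +contextual

theorem ePoly_mul_prod_X (k j : ℕ) (hj : 1 ≤ j) :
    ePoly k j * ∏ i, X i = dickson k ^ j := by
  have hsplit : dickson k = (∏ i, X i) *
      ∏ α ∈ univ.filter (fun α : Fin k → ZMod 2 => α ≠ 0 ∧ ¬ ∃ i, α = Pi.single i 1),
        linF k α := by
    unfold dickson
    rw [← Finset.prod_filter_mul_prod_filter_not _ (fun α => ∃ i, α = Pi.single i 1),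
      Finset.filter_filter, Finset.filter_filter]
    congr 1
    symm
    refine Finset.prod_bij (fun i _ => Pi.single i 1) ?_ ?_ ?_ ?_
    · intro i _
      simpa using ⟨i, rfl⟩
    · intro i _ i' _ h
      by_contra hne
      simpa [hne] using congrFun h i
    · intro α hα
      obtain ⟨i, rfl⟩ := (Finset.mem_filter.1 hα).2.2
      exact ⟨i, Finset.mem_univ _, rfl⟩
    · intro i _
      rw [linF_single]
  rw [hsplit, mul_pow, ← Finset.prod_pow, ← Finset.prod_pow, ePoly, mul_right_comm,
    ← Finset.prod_mul_distrib]
  congr 1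
  refine Finset.prod_congr rfl fun i _ => ?_
  rw [← pow_succ, Nat.sub_add_cancel hj]

/-- If `k ≥ 1`, `j = 2^t + r` with `0 ≤ r ≤ 2^t - 1`, and `d ≥ 2^{t+k-1} + r`, then
`e_{k,j} ∉ ⟨x₁^d, …, x_k^d⟩` in `𝔽₂[x₁,…,x_k]`. -/
theorem ePoly_not_mem_powerIdeal (k t r j d : ℕ) (hk : 1 ≤ k) (hr : r ≤ 2 ^ t - 1)
    (hj : j = 2 ^ t + r) (hd : 2 ^ (t + k - 1) + r ≤ d) :
    ePoly k j ∉
      Ideal.span (Set.range fun i : Fin k => (X i : MvPolynomial (Fin k) F2) ^ d) := by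
  intro he
  have hpos : 0 < 2 ^ t := Nat.two_pow_pos t
  obtain ⟨m, hm, hb⟩ := exists_coeff_dickson_pow_ne_zero k t r (by omega)
  rw [← hj, ← ePoly_mul_prod_X k j (by omega)] at hm
  have hmem : ePoly k j * ∏ i, X i ∈ Ideal.span
      ((fun s => monomial s (1 : F2)) '' Set.range fun i : Fin k => Finsupp.single i (d + 1)) := by
    have hle : Ideal.span (Set.range fun i : Fin k => (X i : MvPolynomial (Fin k) F2) ^ d) ≤
        Submodule.comap (LinearMap.mulRight (MvPolynomial (Fin k) F2) (∏ i, X i)) (Ideal.span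
          ((fun s => monomial s (1 : F2)) ''
            Set.range fun i : Fin k => Finsupp.single i (d + 1))) := by
      refine Ideal.span_le.2 ?_
      rintro _ ⟨i, rfl⟩
      change (X i : MvPolynomial (Fin k) F2) ^ d * ∏ i, X i ∈ Ideal.span _
      rw [← Finset.mul_prod_erase univ _ (Finset.mem_univ i), ← mul_assoc, ← pow_succ]
      refine Ideal.mul_mem_right _ _ (Ideal.subset_span ⟨_, ⟨i, rfl⟩, ?_⟩)
      exact X_pow_eq_monomial.symm
    exact hle he
  obtain ⟨_, ⟨i, rfl⟩, hi⟩ := mem_ideal_span_monomial_image.1 hmem m (mem_support_iff.2 hm)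
  have h1 := hi i
  rw [Finsupp.single_eq_same] at h1
  have h2 := hb i
  omega
end
end

section
/- Let d, ℓ, k be integers with 1 ≤ k ≤ ℓ ≤ d−1. Then the product x₁^{d−1} x₂^{d−1} ⋯ x_k^{d−1} does not belong to the ideal ⟨β₁, …, β_k⟩ of R_{d,ℓ,k}. -/
/-!
Write `m = d - ℓ`. The ring `R_{d,ℓ,k} / ⟨β₁, …, β_k⟩` is the mod 2 cohomology of the `k`-fold
fibre power of the projectivised tautological bundle over the Grassmannian of `ℓ`-planes in
`d`-space, and integration along the fibres sends `x₁^{d-1} ⋯ x_k^{d-1}` to `w̄_m ^ k`, which is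
non-zero because `w̄_m ^ ℓ` is the fundamental class. The proof is an algebraic version of this.

* Splitting: let `t` be `d` variables indexed by `Fin ℓ ⊕ Fin m` and `A = 𝔽₂[t] / J` their
  coinvariant algebra. Sending `w` and `w̄` to the elementary symmetric polynomials of the two
  blocks of variables maps `R_{d,ℓ,k}` to `A[x₁, …, x_k]`.
* Fibre integration: the `A`-linear functional `x^a ↦ ∏ᵢ w̄_{aᵢ+1-ℓ}` kills every multiple of
  `β_i`, because `∑ₛ w_{ℓ-s} w̄_{a+s+1-ℓ} = ρ_{a+1} = 0` (`sum_coeff_mul_segre`). It sends the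
  product in question to `w̄_m ^ k`.
* Non-vanishing: `w̄_m ^ k` is the `k`-th power of the product of the second block of variables,
  hence divides the staircase monomial `t^δ` with exponents `0, 1, …, d - 1`. This monomial is not
  in `J`: the functional "coefficient of `t^δ` in `∑_σ σ f`" is `1` on it
  (`coeff_symSum_monomial`) but vanishes on `J` (`coeff_symSum_mul`), since an exponent vector
  strictly below `δ` has a repeated entry, and such exponents do not occur in `∑_σ σ f` in
  characteristic two.
-/

noncomputable section

open MvPolynomial Finset

/-- Variable index type: `k` variables `x`, `l` variables `w`, `m` variables `w̄`. -/
abbrev RVar (k l m : ℕ) : Type := Fin k ⊕ Fin l ⊕ Fin m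

/-- The variable `xᵢ`. -/
def xP (k l m : ℕ) (i : Fin k) : MvPolynomial (RVar k l m) F2 := X (Sum.inl i)

/-- The class `w_s`, with the convention `w₀ = 1` and `w_s = 0` for `s > l`. -/
def wP (k l m : ℕ) (s : ℕ) : MvPolynomial (RVar k l m) F2 :=
  if s = 0 then 1 else if h : s - 1 < l then X (Sum.inr (Sum.inl ⟨s - 1, h⟩)) else 0

/-- The class `w̄_s`, with the convention `w̄₀ = 1` and `w̄_s = 0` for `s > m`. -/
def wBarP (k l m : ℕ) (s : ℕ) : MvPolynomial (RVar k l m) F2 :=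
  if s = 0 then 1 else if h : s - 1 < m then X (Sum.inr (Sum.inr ⟨s - 1, h⟩)) else 0

/-- The relation `ρ_n = ∑_{s=0}^{n} w_s ⬝ w̄_{n-s}`; by the conventions above this equals
the bounded sum `∑_{s=max{0,n+ℓ-d}}^{min{n,ℓ}} w_s ⬝ w̄_{n-s}`. -/
def rhoP (k l m : ℕ) (n : ℕ) : MvPolynomial (RVar k l m) F2 :=
  ∑ s ∈ Finset.range (n + 1), wP k l m s * wBarP k l m (n - s)

/-- The ideal `I_{d,ℓ}` generated by `ρ_1, …, ρ_d`. -/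
def Irel (d l k : ℕ) : Ideal (MvPolynomial (RVar k l (d - l)) F2) :=
  Ideal.span ((fun n => rhoP k l (d - l) n) '' (Set.Icc 1 d))

/-- The ring `R_{d,ℓ,k}`. -/
abbrev Rdlk (d l k : ℕ) : Type := MvPolynomial (RVar k l (d - l)) F2 ⧸ Irel d l k

/-- The quotient map onto `R_{d,ℓ,k}`. -/
def toR (d l k : ℕ) : MvPolynomial (RVar k l (d - l)) F2 →+* Rdlk d l k :=
  Ideal.Quotient.mk _

/-- `β_i = ∑_{s=0}^{ℓ} x_i^s ⬝ w_{ℓ-s}` in `R_{d,ℓ,k}`. -/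
def betaP (d l k : ℕ) (i : Fin k) : Rdlk d l k :=
  toR d l k (∑ s ∈ Finset.range (l + 1), xP k l (d - l) i ^ s * wP k l (d - l) (l - s))

/-- The ideal `⟨β₁, …, β_k⟩` of `R_{d,ℓ,k}`. -/
def betaIdeal (d l k : ℕ) : Ideal (Rdlk d l k) :=
  Ideal.span (Set.range (betaP d l k))

/-- An injective exponent vector bounded by the staircase is the staircase. -/
lemma eq_of_injective_of_le {τ : Type} {d : ℕ} (e : τ ≃ Fin d) (c : τ → ℕ) (hc : Function.Injective c)
    (hle : ∀ i, c i ≤ (e i : ℕ)) (i : τ) : c i = e i := by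
  have : ∀ n, ∀ i, (e i : ℕ) = n → c i = n := by
    intro n
    induction n using Nat.strong_induction_on with
    | _ n ih =>
      intro i hi
      by_contra hne
      have hlt : c i < n := lt_of_le_of_ne (hi ▸ hle i) hne
      have hnd : n < d := hi ▸ (e i).2
      have h1 := ih (c i) hlt (e.symm ⟨c i, hlt.trans hnd⟩) (by simp)
      have h2 := hc h1
      rw [← h2] at hi
      simp at hi
      omega
  exact this _ i rfl

/-! ### Symmetrization and the staircase monomial -/

section Staircase

variable {τ : Type} [Fintype τ] [DecidableEq τ]

/-- The sum of all the images of `f` under permutations of the variables. -/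
def symSum (f : MvPolynomial τ F2) : MvPolynomial τ F2 :=
  ∑ σ : Equiv.Perm τ, rename σ f

lemma symSum_add (f g : MvPolynomial τ F2) : symSum (f + g) = symSum f + symSum g := by
  simp [symSum, Finset.sum_add_distrib]

lemma symSum_mul (e f : MvPolynomial τ F2) (he : ∀ σ : Equiv.Perm τ, rename σ e = e) :
    symSum (f * e) = symSum f * e := by
  simp [symSum, he, Finset.sum_mul]

/-- If the exponent `c` has a repeated entry, the terms of the symmetrization contributing to the
coefficient at `c` cancel in pairs, via the transposition fixing `c`. -/
lemma coeff_symSum_eq_zero (f : MvPolynomial τ F2) (c : τ →₀ ℕ) {i j : τ} (hij : i ≠ j)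
    (hc : c i = c j) : coeff c (symSum f) = 0 := by
  have hcs : Finsupp.mapDomain (Equiv.swap i j) c = c := by
    ext a
    rw [← Finsupp.equivMapDomain_eq_mapDomain, Finsupp.equivMapDomain_apply, Equiv.symm_swap]
    rcases eq_or_ne a i with rfl | hai
    · simp [hc]
    rcases eq_or_ne a j with rfl | haj
    · simp [hc]
    rw [Equiv.swap_apply_of_ne_of_ne hai haj]
  have key : ∀ σ : Equiv.Perm τ,
      coeff c (rename (Equiv.swap i j * σ : Equiv.Perm τ) f) = coeff c (rename σ f) := by
    intro σ
    have : rename (Equiv.swap i j * σ : Equiv.Perm τ) f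
        = rename (Equiv.swap i j) (rename σ f) := by
      rw [rename_rename]; rfl
    rw [this]
    conv_lhs => rw [← hcs]
    exact coeff_rename_mapDomain _ (Equiv.injective _) _ _
  rw [symSum, coeff_sum]
  refine Finset.sum_involution (fun σ _ => Equiv.swap i j * σ) ?_ ?_ ?_ ?_
  · intro σ _
    rw [key, CharTwo.add_self_eq_zero]
  · intro σ _ _ h
    have := mul_eq_right.mp h
    exact hij (by simpa using congrArg (fun e => e j) this)
  · intros; exact Finset.mem_univ _
  · intro σ _
    rw [← mul_assoc, Equiv.swap_mul_self, one_mul]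

/-- The exponent vector `(0, 1, …, d - 1)`, for an enumeration `e` of the variables. -/
def stair {d : ℕ} (e : τ ≃ Fin d) : τ →₀ ℕ := Finsupp.equivFunOnFinite.symm fun i => (e i : ℕ)

lemma coeff_symSum_mul {d : ℕ} (e : τ ≃ Fin d) (f s : MvPolynomial τ F2)
    (hs : ∀ σ : Equiv.Perm τ, rename σ s = s) (hs0 : coeff 0 s = 0) :
    coeff (stair e) (symSum (f * s)) = 0 := by
  rw [symSum_mul _ _ hs, coeff_mul]
  refine Finset.sum_eq_zero fun p hp => ?_
  rw [Finset.HasAntidiagonal.mem_antidiagonal] at hp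
  have hpi : ∀ i, p.1 i + p.2 i = e i := fun i => by
    rw [← Finsupp.add_apply, hp]; rfl
  by_cases hinj : Function.Injective p.1
  · have h0 : p.2 = 0 := by
      ext i
      have := eq_of_injective_of_le e p.1 hinj (fun i => by have := hpi i; omega) i
      have := hpi i
      simp only [Finsupp.coe_zero, Pi.zero_apply]
      omega
    rw [h0, hs0, mul_zero]
  · simp only [Function.Injective, not_forall] at hinj
    obtain ⟨i, j, h, hij⟩ := hinj
    rw [coeff_symSum_eq_zero f p.1 hij h, zero_mul]

lemma coeff_symSum_monomial {d : ℕ} (e : τ ≃ Fin d) :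
    coeff (stair e) (symSum (monomial (stair e) (1 : F2))) = 1 := by
  rw [symSum, coeff_sum, Finset.sum_eq_single 1]
  · simp
  · intro σ _ hσ
    rw [rename_monomial, coeff_monomial, if_neg]
    intro h
    apply hσ
    ext i
    have h1 := DFunLike.congr_fun h (σ i)
    rw [Finsupp.mapDomain_apply σ.injective] at h1
    have h2 : (e i : ℕ) = e (σ i) := h1
    simpa using (e.injective (Fin.ext h2)).symm
  · simp

end Staircase

/-! ### Elementary symmetric polynomials and the coinvariant ideal -/

section Splitting

variable {R τ ι : Type} [CommRing R] [Fintype τ] [Fintype ι]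

/-- The generating polynomial `∏ᵢ (1 + vᵢ X)` of the elementary symmetric functions of `v`. -/
def genPoly (v : ι → R) : Polynomial R := ∏ i, (1 + Polynomial.C (v i) * Polynomial.X)

lemma natDegree_one_add_C_mul_X_le (r : R) :
    (1 + Polynomial.C r * Polynomial.X : Polynomial R).natDegree ≤ 1 := by
  rw [add_comm, ← Polynomial.C_1]
  exact Polynomial.natDegree_linear_le

lemma genPoly_coeff_zero (v : ι → R) : (genPoly v).coeff 0 = 1 := by
  simp [genPoly, Polynomial.coeff_zero_prod]

lemma genPoly_coeff_card (v : ι → R) : (genPoly v).coeff (Fintype.card ι) = ∏ i, v i := by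
  have := Polynomial.coeff_prod_of_natDegree_le
    (s := Finset.univ) (f := fun i => (1 + Polynomial.C (v i) * Polynomial.X : Polynomial R))
    (n := 1) (fun i _ => natDegree_one_add_C_mul_X_le _)
  rw [mul_one, Finset.card_univ] at this
  rw [genPoly, this]
  simp [Polynomial.coeff_one]

lemma genPoly_coeff_eq_zero (v : ι → R) {s : ℕ} (hs : Fintype.card ι < s) :
    (genPoly v).coeff s = 0 := by
  apply Polynomial.coeff_eq_zero_of_natDegree_lt
  refine lt_of_le_of_lt (Polynomial.natDegree_prod_le _ _) (lt_of_le_of_lt ?_ hs)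
  refine (Finset.sum_le_sum fun i _ => natDegree_one_add_C_mul_X_le (v i)).trans ?_
  simp

lemma genPoly_map {S : Type} [CommRing S] (φ : R →+* S) (v : ι → R) :
    (genPoly v).map φ = genPoly (φ ∘ v) := by
  simp [genPoly, Polynomial.map_prod]

lemma rename_genPoly_X_coeff (σ : Equiv.Perm τ) (n : ℕ) :
    rename σ ((genPoly (X : τ → MvPolynomial τ F2)).coeff n) = (genPoly X).coeff n := by
  have h := genPoly_map (rename σ : MvPolynomial τ F2 →ₐ[F2] _).toRingHom
    (X : τ → MvPolynomial τ F2)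
  have h2 : genPoly ((rename σ : MvPolynomial τ F2 →ₐ[F2] _).toRingHom ∘ X)
      = genPoly (X : τ → MvPolynomial τ F2) := by
    simp only [genPoly, Function.comp]
    simpa using Equiv.prod_comp σ
      (fun i => (1 + Polynomial.C (X i : MvPolynomial τ F2) * Polynomial.X))
  rw [h2] at h
  conv_rhs => rw [← h]
  rw [Polynomial.coeff_map]
  rfl

lemma coeff_zero_genPoly_X_coeff {n : ℕ} (hn : n ≠ 0) :
    coeff 0 ((genPoly (X : τ → MvPolynomial τ F2)).coeff n) = 0 := by
  have h := genPoly_map (constantCoeff : MvPolynomial τ F2 →+* F2) (X : τ → MvPolynomial τ F2)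
  have h2 := congrArg (fun p => Polynomial.coeff p n) h
  simp only [Polynomial.coeff_map] at h2
  rw [← constantCoeff_eq, h2]
  simp [genPoly, Polynomial.coeff_one, hn]

/-- The ideal of `𝔽₂[t]` generated by the elementary symmetric polynomials of positive degree,
whose quotient is the coinvariant algebra. -/
def symIdeal (τ : Type) [Fintype τ] : Ideal (MvPolynomial τ F2) :=
  Ideal.span ((fun n => (genPoly X).coeff n) '' {n | n ≠ 0})

lemma coeff_symSum_of_mem [DecidableEq τ] {d : ℕ} (e : τ ≃ Fin d) {f : MvPolynomial τ F2}
    (hf : f ∈ symIdeal τ) : coeff (stair e) (symSum f) = 0 := by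
  -- Quantifying over the multiplier makes the claim stable under scalar multiplication.
  suffices h : ∀ q, coeff (stair e) (symSum (q * f)) = 0 by simpa using h 1
  rw [symIdeal] at hf
  induction hf using Submodule.span_induction with
  | mem f hf =>
    obtain ⟨n, hn, rfl⟩ := hf
    exact fun q => coeff_symSum_mul e q _ (fun σ => rename_genPoly_X_coeff σ n)
      (coeff_zero_genPoly_X_coeff hn)
  | zero => intro q; simp [symSum]
  | add f g _ _ hf hg => intro q; rw [mul_add, symSum_add, coeff_add, hf, hg, add_zero]
  | smul r f _ hf => intro q; rw [smul_eq_mul, ← mul_assoc, hf]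

end Splitting

/-! ### Fibre integration and the conclusion -/

section Main

/-- The Segre-type class `w̄_{n+1-ℓ}` (zero for `n + 1 < ℓ`), the fibre integral of `x^n`. -/
def segre {A : Type} [CommRing A] (l : ℕ) (Q : Polynomial A) (n : ℕ) : A :=
  if n + 1 < l then 0 else Q.coeff (n + 1 - l)

lemma sum_coeff_mul_segre {A : Type} [CommRing A] (l : ℕ) (P Q : Polynomial A)
    (hP : ∀ s, l < s → P.coeff s = 0) (a : ℕ) :
    ∑ s ∈ Finset.range (l + 1), P.coeff (l - s) * segre l Q (a + s) = (P * Q).coeff (a + 1) := by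
  rw [Polynomial.coeff_mul, Finset.Nat.sum_antidiagonal_eq_sum_range_succ_mk,
    ← Finset.sum_range_reflect]
  have h1 : ∀ s ∈ Finset.range (l + 1),
      P.coeff (l - (l + 1 - 1 - s)) * segre l Q (a + (l + 1 - 1 - s))
        = P.coeff s * (if s < a + 2 then Q.coeff (a + 1 - s) else 0) := by
    intro s hs
    rw [Finset.mem_range] at hs
    have e1 : l - (l + 1 - 1 - s) = s := by omega
    rw [e1, segre]
    congr 1
    by_cases h : s < a + 2
    · rw [if_pos h, if_neg (by omega)]
      congr 1
      omega
    · rw [if_neg h, if_pos (by omega)]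
  have h2 : ∀ s ∈ Finset.range (a + 1).succ, P.coeff s * Q.coeff (a + 1 - s)
        = P.coeff s * (if s < a + 2 then Q.coeff (a + 1 - s) else 0) := by
    intro s hs
    rw [Finset.mem_range] at hs
    rw [if_pos (by omega)]
  rw [Finset.sum_congr rfl h1, Finset.sum_congr rfl h2]
  trans ∑ s ∈ Finset.range (l + a + 2),
    P.coeff s * (if s < a + 2 then Q.coeff (a + 1 - s) else 0)
  · apply Finset.sum_subset
    · intro s; simp only [Finset.mem_range]; omega
    · intro s _ hs
      rw [hP s (by simpa using hs), zero_mul]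
  · symm
    apply Finset.sum_subset
    · intro s; simp only [Finset.mem_range]; omega
    · intro s _ hs
      rw [Finset.mem_range] at hs
      rw [if_neg (by omega), mul_zero]

/-- The `A`-linear functional on `A[x₁, …, x_k]` sending `x^a` to `∏ᵢ g (aᵢ)`. -/
def fibreInt {A : Type} [CommRing A] (k : ℕ) (g : ℕ → A) : MvPolynomial (Fin k) A →ₗ[A] A :=
  (basisMonomials (Fin k) A).constr A fun a => ∏ i, g (a i)

lemma fibreInt_monomial {A : Type} [CommRing A] (k : ℕ) (g : ℕ → A) (a : Fin k →₀ ℕ) :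
    fibreInt k g (monomial a 1) = ∏ i, g (a i) := by
  have := (basisMonomials (Fin k) A).constr_basis A (fun a => ∏ i, g (a i)) a
  simpa [fibreInt] using this

/-- If `g` satisfies the linear recurrence with coefficients `c`, then `fibreInt k g` kills the
multiples of the corresponding polynomial in each variable `x_i`. -/
lemma fibreInt_mul_eq_zero {A : Type} [CommRing A] (k l : ℕ) (g c : ℕ → A)
    (h : ∀ a, ∑ s ∈ Finset.range (l + 1), c s * g (a + s) = 0) (i : Fin k)
    (q : MvPolynomial (Fin k) A) :
    fibreInt k g (q * ∑ s ∈ Finset.range (l + 1), X i ^ s * C (c s)) = 0 := by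
  induction q using MvPolynomial.induction_on' with
  | add p q hp hq => rw [add_mul, map_add, hp, hq, add_zero]
  | monomial a r =>
    have e : ∀ s, (monomial a r * (X i ^ s * C (c s)) : MvPolynomial (Fin k) A)
        = (r * c s) • monomial (a + Finsupp.single i s) 1 := by
      intro s
      rw [X_pow_eq_monomial, mul_comm (monomial (Finsupp.single i s) 1), C_mul_monomial,
        monomial_mul, smul_monomial]
      simp
    rw [Finset.mul_sum, map_sum]
    have e2 : ∀ s ∈ Finset.range (l + 1),
        fibreInt k g (monomial a r * (X i ^ s * C (c s)))
        = (r * ∏ j ∈ Finset.univ.erase i, g (a j)) * (c s * g (a i + s)) := by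
      intro s _
      rw [e, map_smul, fibreInt_monomial, ← Finset.mul_prod_erase _ _ (Finset.mem_univ i)]
      have : ∏ j ∈ Finset.univ.erase i, g ((a + Finsupp.single i s) j)
          = ∏ j ∈ Finset.univ.erase i, g (a j) := by
        refine Finset.prod_congr rfl fun j hj => ?_
        have : i ≠ j := (Finset.ne_of_mem_erase hj).symm
        simp [this]
      rw [this]
      simp
      ring
    rw [Finset.sum_congr rfl e2, ← Finset.mul_sum, h, mul_zero]

lemma map_wP {S : Type} [CommRing S] (k l m : ℕ) (φ : MvPolynomial (RVar k l m) F2 →+* S)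
    (P : Polynomial S) (h0 : P.coeff 0 = 1) (hP : ∀ s, l < s → P.coeff s = 0)
    (h : ∀ j : Fin l, φ (X (Sum.inr (Sum.inl j))) = P.coeff (j + 1)) (s : ℕ) :
    φ (wP k l m s) = P.coeff s := by
  unfold wP
  split_ifs with h1 h2
  · simp [h1, h0]
  · rw [h]; congr 1; simp; omega
  · rw [map_zero, hP s (by omega)]

lemma map_wBarP {S : Type} [CommRing S] (k l m : ℕ) (φ : MvPolynomial (RVar k l m) F2 →+* S)
    (Q : Polynomial S) (h0 : Q.coeff 0 = 1) (hQ : ∀ s, m < s → Q.coeff s = 0)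
    (h : ∀ j : Fin m, φ (X (Sum.inr (Sum.inr j))) = Q.coeff (j + 1)) (s : ℕ) :
    φ (wBarP k l m s) = Q.coeff s := by
  unfold wBarP
  split_ifs with h1 h2
  · simp [h1, h0]
  · rw [h]; congr 1; simp; omega
  · rw [map_zero, hQ s (by omega)]

/-- Non-vanishing of `w̄_m ^ k` in the coinvariant algebra, for `k ≤ ℓ`. -/
lemma prod_inr_pow_not_mem (k l m : ℕ) (hkl : k ≤ l) :
    (∏ j : Fin m, X (Sum.inr j) : MvPolynomial (Fin l ⊕ Fin m) F2) ^ k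
      ∉ symIdeal (Fin l ⊕ Fin m) := by
  intro hmem
  have hdvd : (∏ j : Fin m, X (Sum.inr j) : MvPolynomial (Fin l ⊕ Fin m) F2) ^ k
      ∣ monomial (stair finSumFinEquiv) (1 : F2) := by
    have : (monomial (stair (finSumFinEquiv (m := l) (n := m))) (1 : F2))
        = ∏ i, X i ^ (finSumFinEquiv i : ℕ) := by
      rw [monomial_eq, Finsupp.prod_fintype _ _ (by simp)]
      simp [stair]
    rw [this, Fintype.prod_sum_type, ← Finset.prod_pow]
    refine Dvd.dvd.mul_left (Finset.prod_dvd_prod_of_dvd _ _ fun j _ => pow_dvd_pow _ ?_) _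
    simp
    omega
  have h1 := coeff_symSum_of_mem finSumFinEquiv (Ideal.mem_of_dvd _ hdvd hmem)
  rw [coeff_symSum_monomial] at h1
  exact one_ne_zero h1

/-- Fibre integration over an algebra `A`: let `P` and `Q` be polynomials over `A` with `P * Q = 1`
whose coefficients serve as values of the classes `w` and `w̄`. If `x₁^{d-1} ⋯ x_k^{d-1}` lies in
`⟨β₁, …, β_k⟩`, then the power `w̄_{d-ℓ} ^ k` vanishes in `A`. -/
lemma coeff_pow_eq_zero {A : Type} [CommRing A] [Algebra F2 A] (d l k : ℕ) (hd : l < d)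
    (P Q : Polynomial A) (hPQ : ∀ n ≠ 0, (P * Q).coeff n = 0)
    (hP0 : P.coeff 0 = 1) (hQ0 : Q.coeff 0 = 1)
    (hP : ∀ s, l < s → P.coeff s = 0) (hQ : ∀ s, d - l < s → Q.coeff s = 0)
    (hmem : toR d l k (∏ i : Fin k, xP k l (d - l) i ^ (d - 1)) ∈ betaIdeal d l k) :
    Q.coeff (d - l) ^ k = 0 := by
  let φ : MvPolynomial (RVar k l (d - l)) F2 →+* MvPolynomial (Fin k) A :=
    (aeval (R := F2) (Sum.elim (fun i => X i) (Sum.elim (fun j : Fin l => C (P.coeff (j + 1)))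
      (fun j : Fin (d - l) => C (Q.coeff (j + 1)))))).toRingHom
  have hx : ∀ i, φ (xP k l (d - l) i) = X i := fun i => by simp [φ, xP]
  have hw : ∀ s, φ (wP k l (d - l) s) = C (P.coeff s) := fun s => by
    rw [map_wP k l (d - l) φ (P.map C) (by simp [hP0])
      (fun s hs => by simp [hP s hs]) (fun j => by simp [φ]), Polynomial.coeff_map]
  have hwb : ∀ s, φ (wBarP k l (d - l) s) = C (Q.coeff s) := fun s => by
    rw [map_wBarP k l (d - l) φ (Q.map C) (by simp [hQ0])
      (fun s hs => by simp [hQ s hs]) (fun j => by simp [φ]), Polynomial.coeff_map]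
  have hI : ∀ a ∈ Irel d l k, φ a = 0 := by
    have : Irel d l k ≤ RingHom.ker φ := by
      rw [Irel, Ideal.span_le]
      rintro _ ⟨n, hn, rfl⟩
      rw [SetLike.mem_coe, RingHom.mem_ker]
      simp only [rhoP, map_sum]
      have := hPQ n (by have := hn.1; omega)
      rw [Polynomial.coeff_mul, Finset.Nat.sum_antidiagonal_eq_sum_range_succ_mk] at this
      simp_rw [map_mul, hw, hwb, ← C_mul]
      rw [← map_sum, this, C_0]
    exact fun a ha => this ha
  let Ψ : Rdlk d l k →+* MvPolynomial (Fin k) A := Ideal.Quotient.lift _ φ hI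
  have hΨ : ∀ f, Ψ (toR d l k f) = φ f := fun f => Ideal.Quotient.lift_mk _ _ _
  have hβ : ∀ i, Ψ (betaP d l k i)
      = ∑ s ∈ Finset.range (l + 1), X i ^ s * C (P.coeff (l - s)) := fun i => by
    rw [betaP, hΨ, map_sum]
    simp_rw [map_mul, map_pow, hx, hw]
  have hkill : ∀ f ∈ betaIdeal d l k, ∀ q, fibreInt k (segre l Q) (q * Ψ f) = 0 := by
    intro f hf
    induction hf using Submodule.span_induction with
    | mem f hf =>
      obtain ⟨i, rfl⟩ := hf
      intro q
      rw [hβ]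
      exact fibreInt_mul_eq_zero k l _ (fun s => P.coeff (l - s))
        (fun a => by rw [sum_coeff_mul_segre l P Q hP, hPQ _ (by omega)]) i q
    | zero => simp
    | add f g _ _ hf hg => intro q; rw [map_add, mul_add, map_add, hf, hg, add_zero]
    | smul r f _ hf => intro q; rw [smul_eq_mul, map_mul Ψ, ← mul_assoc, hf]
  have h1 := hkill _ hmem 1
  have h2 : (∏ i : Fin k, X i ^ (d - 1) : MvPolynomial (Fin k) A)
      = monomial (Finsupp.equivFunOnFinite.symm fun _ => d - 1) 1 := by
    rw [monomial_eq, Finsupp.prod_fintype _ _ (by simp)]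
    simp
  rw [one_mul, hΨ, map_prod] at h1
  simp_rw [map_pow, hx] at h1
  rw [h2, fibreInt_monomial] at h1
  have h3 : segre l Q (d - 1) = Q.coeff (d - l) := by
    rw [segre, if_neg (by omega)]
    congr 1
    omega
  simpa [h3] using h1

end Main

/-- For `1 ≤ k ≤ ℓ ≤ d-1`, the product `x₁^{d-1} ⋯ x_k^{d-1}` does not belong to the
ideal `⟨β₁, …, β_k⟩` of `R_{d,ℓ,k}`. -/
theorem prod_xP_pow_not_mem_betaIdeal (d l k : ℕ) (hk : 1 ≤ k) (hkl : k ≤ l)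
    (hld : l ≤ d - 1) :
    toR d l k (∏ i : Fin k, xP k l (d - l) i ^ (d - 1)) ∉ betaIdeal d l k := by
  intro hmem
  let π := Ideal.Quotient.mk (symIdeal (Fin l ⊕ Fin (d - l)))
  let P : Polynomial (MvPolynomial (Fin l ⊕ Fin (d - l)) F2) :=
    genPoly fun j : Fin l => X (Sum.inl j)
  let Q : Polynomial (MvPolynomial (Fin l ⊕ Fin (d - l)) F2) :=
    genPoly fun j : Fin (d - l) => X (Sum.inr j)
  have hprod : P * Q = genPoly X := by
    simp only [P, Q, genPoly, Fintype.prod_sum_type]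
  have h := coeff_pow_eq_zero d l k (by omega) (P.map π) (Q.map π)
    (fun n hn => by
      rw [← Polynomial.map_mul, hprod, Polynomial.coeff_map, Ideal.Quotient.eq_zero_iff_mem]
      exact Ideal.subset_span ⟨n, hn, rfl⟩)
    (by simp [P, genPoly_coeff_zero]) (by simp [Q, genPoly_coeff_zero])
    (fun s hs => by
      rw [Polynomial.coeff_map, genPoly_coeff_eq_zero _ (by simpa using hs), map_zero])
    (fun s hs => by
      rw [Polynomial.coeff_map, genPoly_coeff_eq_zero _ (by simpa using hs), map_zero])
    hmem
  have hQ : Q.coeff (d - l) = ∏ j : Fin (d - l), X (Sum.inr j) := by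
    have := genPoly_coeff_card
      (fun j : Fin (d - l) => (X (Sum.inr j) : MvPolynomial (Fin l ⊕ Fin (d - l)) F2))
    rwa [Fintype.card_fin] at this
  rw [Polynomial.coeff_map, ← map_pow, Ideal.Quotient.eq_zero_iff_mem, hQ] at h
  exact prod_inr_pow_not_mem k l (d - l) hkl h
end
end
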